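/- arXiv:1712.08306 — 3 statements merged into one kernel-verified Lean document; each statement's English description precedes it below -/
import Mathlib

section
/- For all integers i, j and every integer k ≥ 1, the bimoment determinants satisfy the bilinear identity G_k^{(i,j+1)} F_{k−1}^{(i+1,j)} = F_k^{(i,j)} G_{k−1}^{(i+1,j+1)} + F_{k−1}^{(i+1,j+1)} G_k^{(i,j)}. -/
open Finset

/-- Single moments `α_i = Σ_p ζ_p^i a_p`. -/
noncomputable def alphaM (n : ℕ) (ζ a : Fin n → ℝ) (i : ℤ) : ℝ :=
  ∑ p : Fin n, ζ p ^ i * a p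

/-- Bimoments `I_{i,j} = Σ_p Σ_q ζ_p^i ζ_q^j / (ζ_p + ζ_q) a_p a_q`. -/
noncomputable def Imom (n : ℕ) (ζ a : Fin n → ℝ) (i j : ℤ) : ℝ :=
  ∑ p : Fin n, ∑ q : Fin n, ζ p ^ i * ζ q ^ j / (ζ p + ζ q) * (a p * a q)

/-- `F_k^{(i,j)} = det (I_{i+r,j+s})_{0 ≤ r,s ≤ k-1}`, with `F_0 = 1` and `F_k = 0` for `k < 0`. -/
noncomputable def Fdet (n : ℕ) (ζ a : Fin n → ℝ) (i j k : ℤ) : ℝ :=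
  if k < 0 then 0
  else Matrix.det (Matrix.of fun r s : Fin k.toNat =>
    Imom n ζ a (i + ((r : ℕ) : ℤ)) (j + ((s : ℕ) : ℤ)))

/-- `G_k^{(i,j)}`: first column `(α_{i-1}, …, α_{i+k-2})ᵀ`, remaining block
`(I_{i+r,j+s})_{0 ≤ r ≤ k-1, 0 ≤ s ≤ k-2}`; `G_1 = α_{i-1}` and `G_k = 0` for `k < 1`. -/
noncomputable def Gdet (n : ℕ) (ζ a : Fin n → ℝ) (i j k : ℤ) : ℝ :=
  if k < 1 then 0
  else Matrix.det (Matrix.of fun r s : Fin k.toNat =>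
    if (s : ℕ) = 0 then alphaM n ζ a (i - 1 + ((r : ℕ) : ℤ))
    else Imom n ζ a (i + ((r : ℕ) : ℤ)) (j + (((s : ℕ) - 1 : ℕ) : ℤ)))

/-- `E_k^{(i,j)}`: `(1,1)` entry `0`, first row `(0, α_{j-1}, …, α_{j+k-3})`, first column
`(0, α_{i-1}, …, α_{i+k-3})ᵀ`, remaining block `(I_{i+r,j+s})_{0 ≤ r,s ≤ k-2}`;
`E_k = 0` for `k < 2`. -/
noncomputable def Edet (n : ℕ) (ζ a : Fin n → ℝ) (i j k : ℤ) : ℝ :=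
  if k < 2 then 0
  else Matrix.det (Matrix.of fun r s : Fin k.toNat =>
    if (r : ℕ) = 0 then
      (if (s : ℕ) = 0 then 0 else alphaM n ζ a (j - 1 + (((s : ℕ) - 1 : ℕ) : ℤ)))
    else if (s : ℕ) = 0 then alphaM n ζ a (i - 1 + (((r : ℕ) - 1 : ℕ) : ℤ))
    else Imom n ζ a (i + (((r : ℕ) - 1 : ℕ) : ℤ)) (j + (((s : ℕ) - 1 : ℕ) : ℤ)))

/-!
The identity is a three-term Plücker relation, valid for an arbitrary sequence `α` and an arbitrary
array `I` over a commutative ring. Let `c_s` be the columns of `(I_{i+r,j+s})`, `x` the column of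
the `α`s, and `e` the first standard basis vector; putting `e` in front deletes the first row, so
every determinant in the identity involves `k` vectors of length `k`, those of upper index
`(i+1, ·)` being bordered by `e`. By Cramer's rule, `det (e, c_0, C) • x` with
`C = (c_1, …, c_{k-2})` is `det (x, c_0, C) • e + det (e, x, C) • c_0` up to a combination of the
columns of `C`. Applying the linear form `w ↦ det (w, c_1, …, c_{k-1})`, which kills those columns,
gives the claim.
-/

open Matrix

section ConsRow

variable {R : Type*} {k l : ℕ}

/-- The matrix obtained from `A` by putting the row `v` on top; the bordered determinants are
described by listing rows in this way. -/
def consRow (v : Fin l → R) (A : Matrix (Fin k) (Fin l) R) : Matrix (Fin (k + 1)) (Fin l) R :=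
  of (Fin.cons v A)

@[simp]
theorem consRow_zero (v : Fin l → R) (A : Matrix (Fin k) (Fin l) R) : consRow v A 0 = v :=
  rfl

@[simp]
theorem consRow_succ (v : Fin l → R) (A : Matrix (Fin k) (Fin l) R) (r : Fin k) :
    consRow v A r.succ = A r :=
  rfl

@[simp]
theorem updateRow_consRow_zero (v w : Fin l → R) (A : Matrix (Fin k) (Fin l) R) :
    (consRow v A).updateRow 0 w = consRow w A :=
  Fin.update_cons_zero (α := fun _ => Fin l → R) v A w

@[simp]
theorem updateRow_consRow_succ (v w : Fin l → R) (A : Matrix (Fin k) (Fin l) R) (r : Fin k) :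
    (consRow v A).updateRow r.succ w = consRow v (A.updateRow r w) :=
  (Fin.cons_update (α := fun _ => Fin l → R) v A r w).symm

theorem submatrix_consRow {l' : ℕ} (v : Fin l → R) (A : Matrix (Fin k) (Fin l) R)
    (f : Fin l' → Fin l) :
    (consRow v A).submatrix id f = consRow (v ∘ f) (A.submatrix id f) := by
  ext r
  cases r using Fin.cases <;> rfl

end ConsRow

section Determinants

variable {R : Type*} [CommRing R]

theorem det_smul_eq_sum_det_updateRow_smul {ι : Type*} [Fintype ι] [DecidableEq ι]
    (A : Matrix ι ι R) (x : ι → R) : A.det • x = ∑ r, (A.updateRow r x).det • A r := by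
  rw [← det_transpose A, ← mulVec_cramer, mulVec_eq_sum]
  simp only [cramer_transpose_apply, transpose_transpose, op_smul_eq_smul]

theorem det_consRow_consRow_smul_map {M : Type*} [AddCommGroup M] [Module R M] {m : ℕ}
    (D : (Fin (m + 2) → R) →ₗ[R] M) {C : Matrix (Fin m) (Fin (m + 2)) R} (hC : ∀ r, D (C r) = 0)
    (u v x : Fin (m + 2) → R) :
    (consRow u (consRow v C)).det • D x =
      (consRow x (consRow v C)).det • D u + (consRow u (consRow x C)).det • D v := by
  rw [← map_smul, det_smul_eq_sum_det_updateRow_smul, map_sum, Fin.sum_univ_succ,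
    Fin.sum_univ_succ]
  simp only [map_smul, updateRow_consRow_zero, updateRow_consRow_succ, consRow_zero, consRow_succ,
    hC, smul_zero, Finset.sum_const_zero, add_zero]

theorem det_consRow_mul_det_consRow_consRow {m : ℕ} {B : Matrix (Fin (m + 1)) (Fin (m + 2)) R}
    {C : Matrix (Fin m) (Fin (m + 2)) R} (hCB : Set.range C ⊆ Set.range B)
    (u v x : Fin (m + 2) → R) :
    (consRow x B).det * (consRow u (consRow v C)).det =
      (consRow u B).det * (consRow x (consRow v C)).det +
        (consRow v B).det * (consRow u (consRow x C)).det := by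
  let D : (Fin (m + 2) → R) →ₗ[R] R :=
    detRowAlternating.toMultilinearMap.toLinearMap (consRow 0 B) 0
  have D_apply (w : Fin (m + 2) → R) : D w = (consRow w B).det :=
    congrArg det (updateRow_consRow_zero 0 w B)
  have D_row (r : Fin m) : D (C r) = 0 := by
    obtain ⟨t, ht⟩ := hCB ⟨r, rfl⟩
    rw [D_apply]
    refine det_zero_of_row_eq (Fin.succ_ne_zero t).symm ?_
    rw [consRow_zero, consRow_succ, ht]
  simpa only [D_apply, smul_eq_mul, mul_comm] using det_consRow_consRow_smul_map D D_row u v x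

theorem det_consRow_single_zero {m : ℕ} (A : Matrix (Fin m) (Fin (m + 1)) R) :
    (consRow (Pi.single 0 1) A).det = (A.submatrix id Fin.succ).det := by
  rw [det_succ_row_zero, Finset.sum_eq_single_of_mem 0 (Finset.mem_univ 0)]
  · rw [consRow_zero, Pi.single_eq_same, Fin.val_zero, pow_zero, one_mul, one_mul]
    rfl
  · intro s _ hs
    rw [consRow_zero, Pi.single_eq_of_ne hs, mul_zero, zero_mul]

end Determinants

section ShiftedBlock

variable {R : Type*} (I : ℤ → ℤ → R) (i j : ℤ) (k l : ℕ)

/-- The `l × k` block `(I_{i+r,j+s})_{r < l, s < k}` of a doubly infinite array, transposed so that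
its columns can be listed by `consRow`. -/
def shiftedBlock : Matrix (Fin k) (Fin l) R :=
  of fun s r => I (i + (r : ℕ)) (j + (s : ℕ))

theorem shiftedBlock_succ :
    shiftedBlock I i j (k + 1) l =
      consRow (fun r => I (i + (r : ℕ)) j) (shiftedBlock I i (j + 1) k l) := by
  ext s r
  cases s using Fin.cases with
  | zero => simp [shiftedBlock]
  | succ s => simp [shiftedBlock, add_assoc, add_comm (1 : ℤ)]

theorem submatrix_shiftedBlock_succ :
    (shiftedBlock I i j k (l + 1)).submatrix id Fin.succ = shiftedBlock I (i + 1) j k l := by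
  ext s r
  simp [shiftedBlock, add_assoc, add_comm (1 : ℤ)]

theorem range_shiftedBlock_subset :
    Set.range (shiftedBlock I i j k l) ⊆ Set.range (shiftedBlock I i j (k + 1) l) := by
  rintro _ ⟨s, rfl⟩
  exact ⟨s.castSucc, rfl⟩

end ShiftedBlock

section ShiftedDeterminants

variable {R : Type*} [CommRing R]

/-- The determinant `F_k^{(i,j)}` of an arbitrary array `I` in place of the bimoments. -/
def shiftedDet (I : ℤ → ℤ → R) (i j : ℤ) (k : ℕ) : R :=
  (shiftedBlock I i j k k).det

/-- The determinant `G_k^{(i,j)}` of an arbitrary sequence `α` and array `I` in place of the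
moments and bimoments, with `G_0 = 0`. -/
def borderedDet (α : ℤ → R) (I : ℤ → ℤ → R) (i j : ℤ) : ℕ → R
  | 0 => 0
  | k + 1 => (consRow (fun r => α (i - 1 + (r : ℕ))) (shiftedBlock I i j k (k + 1))).det

variable (α : ℤ → R) (I : ℤ → ℤ → R) (i j : ℤ) (k : ℕ)

theorem det_consRow_single_zero_shiftedBlock :
    (consRow (Pi.single 0 1) (shiftedBlock I i j k (k + 1))).det = shiftedDet I (i + 1) j k := by
  rw [det_consRow_single_zero, submatrix_shiftedBlock_succ, shiftedDet]

theorem det_consRow_single_zero_consRow_shiftedBlock :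
    (consRow (Pi.single 0 1)
      (consRow (fun r => α (i - 1 + (r : ℕ))) (shiftedBlock I i j k (k + 2)))).det =
      borderedDet α I (i + 1) j (k + 1) := by
  have shift_α : (fun r : Fin (k + 2) => α (i - 1 + (r : ℕ))) ∘ Fin.succ =
      fun r : Fin (k + 1) => α (i + 1 - 1 + (r : ℕ)) := by
    funext r
    exact congrArg α (by push_cast [Fin.val_succ]; ring)
  rw [det_consRow_single_zero, submatrix_consRow, shift_α, submatrix_shiftedBlock_succ,
    borderedDet]

end ShiftedDeterminants

theorem stmt_8_general {R : Type*} [CommRing R] (α : ℤ → R) (I : ℤ → ℤ → R) (i j : ℤ) (k : ℕ) :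
    borderedDet α I i (j + 1) (k + 1) * shiftedDet I (i + 1) j k =
      shiftedDet I i j (k + 1) * borderedDet α I (i + 1) (j + 1) k +
        shiftedDet I (i + 1) (j + 1) k * borderedDet α I i j (k + 1) := by
  obtain _ | m := k
  · simp [borderedDet, shiftedBlock, shiftedDet]
  have plucker := det_consRow_mul_det_consRow_consRow
    (range_shiftedBlock_subset I i (j + 1) m (m + 2)) (Pi.single 0 1)
    (fun r => I (i + (r : ℕ)) j) (fun r => α (i - 1 + (r : ℕ)))
  rw [det_consRow_single_zero_consRow_shiftedBlock, det_consRow_single_zero_shiftedBlock,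
    ← shiftedBlock_succ, ← shiftedBlock_succ, det_consRow_single_zero_shiftedBlock] at plucker
  exact plucker.trans (add_comm _ _)

section Bimoments

variable (n : ℕ) (ζ a : Fin n → ℝ) (i j : ℤ) (k : ℕ)

theorem Fdet_natCast : Fdet n ζ a i j k = shiftedDet (Imom n ζ a) i j k := by
  rw [shiftedDet, ← det_transpose, Fdet, if_neg (by lia)]
  rfl

theorem Gdet_natCast : Gdet n ζ a i j k = borderedDet (alphaM n ζ a) (Imom n ζ a) i j k := by
  obtain _ | k := k
  · rfl
  rw [borderedDet, ← det_transpose, Gdet, if_neg (by lia)]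
  refine congrArg det ?_
  ext r s
  cases s using Fin.cases <;> rfl

end Bimoments

/-- Lemma 2.8, identity (2.17): for all `i, j ∈ ℤ` and `k ≥ 1`,
`G_k^{(i,j+1)} F_{k-1}^{(i+1,j)} = F_k^{(i,j)} G_{k-1}^{(i+1,j+1)} + F_{k-1}^{(i+1,j+1)} G_k^{(i,j)}`. -/
theorem stmt_8 (n : ℕ) (hn : 1 ≤ n) (ζ a : Fin n → ℝ)
    (hζ0 : ∀ p, 0 < ζ p) (hζmono : StrictMono ζ) (ha : ∀ p, 0 < a p)
    (i j k : ℤ) (hk : 1 ≤ k) :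
    Gdet n ζ a i (j + 1) k * Fdet n ζ a (i + 1) j (k - 1) =
      Fdet n ζ a i j k * Gdet n ζ a (i + 1) (j + 1) (k - 1) +
        Fdet n ζ a (i + 1) (j + 1) (k - 1) * Gdet n ζ a i j k := by
  obtain ⟨m, rfl⟩ : ∃ m : ℕ, k = (m + 1 : ℕ) := ⟨(k - 1).toNat, by lia⟩
  rw [show ((m + 1 : ℕ) : ℤ) - 1 = m by lia]
  simpa only [Fdet_natCast, Gdet_natCast] using stmt_8_general (alphaM n ζ a) (Imom n ζ a) i j m
end

section
/- For all integers i, j and every integer k ≥ 1, the determinants built from the moments J and β satisfy the two bilinear identities: ρ_{k+1}^{(i,j)} τ_{k−1}^{(i,j)} = τ_k^{(i,j)} ρ_k^{(i,j)} − σ_k^{(i,j)} σ_k^{(j,i)}, and σ_k^{(j,i)} σ_{k−1}^{(i,j)} = ν_k^{(i,j)} τ_{k−1}^{(i,j)} − ρ_k^{(i,j)} ω_{k−1}^{(i,j)}. -/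
open Finset

/-- Single moments `β_i = Σ_p ξ_p^i c_p`. -/
noncomputable def betaM (n : ℕ) (ξ c : Fin n → ℝ) (i : ℤ) : ℝ :=
  ∑ p : Fin n, ξ p ^ i * c p

/-- Bimoments `J_{i,j} = Σ_p Σ_q ξ_p^i ξ_q^j / (ξ_p + ξ_q) c_p c_q`. -/
noncomputable def Jmom (n : ℕ) (ξ c : Fin n → ℝ) (i j : ℤ) : ℝ :=
  ∑ p : Fin n, ∑ q : Fin n, ξ p ^ i * ξ q ^ j / (ξ p + ξ q) * (c p * c q)

/-- `τ_k^{(i,j)} = det (J_{i+r,j+s})_{0 ≤ r,s ≤ k-1}`, with `τ_0 = 1` and `τ_k = 0` for `k < 0`. -/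
noncomputable def tauDet (n : ℕ) (ξ c : Fin n → ℝ) (i j k : ℤ) : ℝ :=
  if k < 0 then 0
  else Matrix.det (Matrix.of fun r s : Fin k.toNat =>
    Jmom n ξ c (i + ((r : ℕ) : ℤ)) (j + ((s : ℕ) : ℤ)))

/-- `σ_k^{(i,j)}`: first column `(β_i, …, β_{i+k-1})ᵀ`, remaining block
`(J_{i+r,j+s})_{0 ≤ r ≤ k-1, 0 ≤ s ≤ k-2}`; `σ_1 = β_i` and `σ_k = 0` for `k < 1`. -/
noncomputable def sigmaDet (n : ℕ) (ξ c : Fin n → ℝ) (i j k : ℤ) : ℝ :=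
  if k < 1 then 0
  else Matrix.det (Matrix.of fun r s : Fin k.toNat =>
    if (s : ℕ) = 0 then betaM n ξ c (i + ((r : ℕ) : ℤ))
    else Jmom n ξ c (i + ((r : ℕ) : ℤ)) (j + (((s : ℕ) - 1 : ℕ) : ℤ)))

/-- `ρ_k^{(i,j)}`: `(1,1)` entry `0`, first row `(0, β_j, …, β_{j+k-2})`, first column
`(0, β_i, …, β_{i+k-2})ᵀ`, remaining block `(J_{i+r,j+s})_{0 ≤ r,s ≤ k-2}`;
`ρ_k = 0` for `k < 2`. -/
noncomputable def rhoDet (n : ℕ) (ξ c : Fin n → ℝ) (i j k : ℤ) : ℝ :=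
  if k < 2 then 0
  else Matrix.det (Matrix.of fun r s : Fin k.toNat =>
    if (r : ℕ) = 0 then
      (if (s : ℕ) = 0 then 0 else betaM n ξ c (j + (((s : ℕ) - 1 : ℕ) : ℤ)))
    else if (s : ℕ) = 0 then betaM n ξ c (i + (((r : ℕ) - 1 : ℕ) : ℤ))
    else Jmom n ξ c (i + (((r : ℕ) - 1 : ℕ) : ℤ)) (j + (((s : ℕ) - 1 : ℕ) : ℤ)))

/-- `ω_k^{(i,j)}`: the `k×k` determinant with rows indexed by `i, …, i+k-1` and columns
`J_{·,j}, …, J_{·,j+k-2}, J_{·,j+k}` (the last column index jumps an extra step);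
`ω_1 = J_{i,j+1}` and `ω_k = 0` for `k < 1`. -/
noncomputable def omegaDet (n : ℕ) (ξ c : Fin n → ℝ) (i j k : ℤ) : ℝ :=
  if k < 1 then 0
  else Matrix.det (Matrix.of fun r s : Fin k.toNat =>
    Jmom n ξ c (i + ((r : ℕ) : ℤ))
      (j + (if (s : ℕ) = k.toNat - 1 then ((s : ℕ) : ℤ) + 1 else ((s : ℕ) : ℤ))))

/-- `ν_k^{(i,j)}`: like `ρ_k^{(i,j)}` but with the last column index jumping an extra step,
i.e. first row `(0, β_j, …, β_{j+k-3}, β_{j+k-1})` and last `J`-column `(J_{i+r,j+k-1})_r`;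
`ν_k = 0` for `k < 2`. -/
noncomputable def nuDet (n : ℕ) (ξ c : Fin n → ℝ) (i j k : ℤ) : ℝ :=
  if k < 2 then 0
  else Matrix.det (Matrix.of fun r s : Fin k.toNat =>
    if (r : ℕ) = 0 then
      (if (s : ℕ) = 0 then 0
       else betaM n ξ c
         (j + (if (s : ℕ) = k.toNat - 1 then ((s : ℕ) : ℤ) else ((s : ℕ) : ℤ) - 1)))
    else if (s : ℕ) = 0 then betaM n ξ c (i + (((r : ℕ) - 1 : ℕ) : ℤ))
    else Jmom n ξ c (i + (((r : ℕ) - 1 : ℕ) : ℤ))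
      (j + (if (s : ℕ) = k.toNat - 1 then ((s : ℕ) : ℤ) else ((s : ℕ) : ℤ) - 1)))

/-!
Adjoin a border index `none` to the row and column indices `ℤ` of the bimoments. Then every
determinant involved is a minor of a single bordered matrix `B`, which is symmetric because `J` is.
The first identity is the Desnanot–Jacobi identity for the rows and columns `none, i, …` and
`none, j, …`; the second is the three-term Plücker relation with one row deleted. Both come from the
exchange relation for replacing two columns of a square matrix, which Cramer's rule yields over any
commutative ring.
-/

section ColumnExchange

open Matrix

variable {n R : Type*} [Fintype n] [DecidableEq n] [CommRing R]

theorem cramer_mulVec (A : Matrix n n R) (x : n → R) : A.cramer (A *ᵥ x) = A.det • x := by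
  rw [cramer_eq_adjugate_mulVec, mulVec_mulVec, adjugate_mul, smul_mulVec, one_mulVec]

theorem updateCol_mulVec (A : Matrix n n R) (p : n) (c x : n → R) :
    A.updateCol p c *ᵥ x = A *ᵥ x + x p • (c - A.col p) := by
  ext r
  have entry (t : n) :
      A.updateCol p c r t * x t = A r t * x t + if t = p then x p * (c r - A r p) else 0 := by
    by_cases h : t = p
    · subst h
      simp only [updateCol_self, if_true]
      ring
    · simp [h]
  simp [mulVec, dotProduct, entry, Finset.sum_add_distrib]

theorem det_updateCol_updateCol_col (A : Matrix n n R) {p q : n} (hpq : p ≠ q) (c : n → R) :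
    ((A.updateCol p c).updateCol q (A.col p)).det = -(A.updateCol q c).det := by
  have swapped : (A.updateCol p c).updateCol q (A.col p) =
      (A.updateCol q c).submatrix id (Equiv.swap p q) := by
    ext r t
    rcases eq_or_ne t q with rfl | hq
    · simp [hpq]
    · rcases eq_or_ne t p with rfl | hp
      · simp [hpq]
      · simp [Equiv.swap_apply_of_ne_of_ne hp hq, hp, hq]
  rw [swapped, det_permute', Equiv.Perm.sign_swap hpq]
  simp

theorem det_mul_det_updateCol_updateCol (A : Matrix n n R) {p q : n} (hpq : p ≠ q)
    (c d : n → R) :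
    A.det * ((A.updateCol p c).updateCol q d).det =
      (A.updateCol p c).det * (A.updateCol q d).det -
        (A.updateCol p d).det * (A.updateCol q c).det := by
  set N := A.updateCol p c with hN
  set x := A.cramer d with hx
  have cramers_rule : A.det • d = N *ᵥ x - x p • (c - A.col p) := by
    rw [updateCol_mulVec, mulVec_cramer, add_sub_cancel_right]
  have cramer_c : N.cramer c q = 0 := by
    rw [cramer_row_self N c p (by simp [hN]), Pi.single_eq_of_ne hpq.symm]
  have cramer_col : N.cramer (A.col p) q = -(A.updateCol q c).det := by
    rw [cramer_apply, det_updateCol_updateCol_col A hpq]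
  calc A.det * (N.updateCol q d).det
      = N.cramer (A.det • d) q := by rw [map_smul, Pi.smul_apply, cramer_apply, smul_eq_mul]
    _ = N.det * x q - x p * (N.cramer c q - N.cramer (A.col p) q) := by
      rw [cramers_rule]
      simp only [map_sub, map_smul, cramer_mulVec, Pi.sub_apply, Pi.smul_apply, smul_eq_mul]
    _ = N.det * (A.updateCol q d).det - (A.updateCol p d).det * (A.updateCol q c).det := by
      rw [cramer_c, cramer_col, hx, cramer_apply, cramer_apply]
      ring

end ColumnExchange

section Minors

variable {m : ℕ} {R : Type*} [CommRing R]

theorem det_updateCol_single (A : Matrix (Fin (m + 1)) (Fin (m + 1)) R) (r p : Fin (m + 1)) :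
    (A.updateCol p (Pi.single r 1)).det =
      (-1) ^ (r + p : ℕ) * (A.submatrix r.succAbove p.succAbove).det := by
  rw [← Matrix.adjugate_fin_succ_eq_det_submatrix, ← Matrix.cramer_apply,
    Matrix.cramer_eq_adjugate_mulVec, Matrix.mulVec_single_one, Matrix.col_apply]

theorem det_updateCol_zero_single_zero (A : Matrix (Fin (m + 1)) (Fin (m + 1)) R) :
    (A.updateCol 0 (Pi.single 0 1)).det = (A.submatrix Fin.succ Fin.succ).det := by
  simp [det_updateCol_single, Fin.succAbove_zero]

theorem det_updateCol_last_single_zero (A : Matrix (Fin (m + 1)) (Fin (m + 1)) R) :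
    (A.updateCol (Fin.last m) (Pi.single 0 1)).det =
      (-1) ^ m * (A.submatrix Fin.succ Fin.castSucc).det := by
  simp [det_updateCol_single, Fin.succAbove_zero, Fin.succAbove_last]

theorem det_updateCol_zero_single_last (A : Matrix (Fin (m + 1)) (Fin (m + 1)) R) :
    (A.updateCol 0 (Pi.single (Fin.last m) 1)).det =
      (-1) ^ m * (A.submatrix Fin.castSucc Fin.succ).det := by
  simp [det_updateCol_single, Fin.succAbove_zero, Fin.succAbove_last]

theorem det_updateCol_last_single_last (A : Matrix (Fin (m + 1)) (Fin (m + 1)) R) :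
    (A.updateCol (Fin.last m) (Pi.single (Fin.last m) 1)).det =
      (A.submatrix Fin.castSucc Fin.castSucc).det := by
  simp [det_updateCol_single, Fin.succAbove_last, ← two_mul]

theorem neg_one_pow_mul_mul_neg_one_pow_mul (m : ℕ) (x y : R) :
    (-1) ^ m * x * ((-1) ^ m * y) = x * y := by
  rw [mul_mul_mul_comm, ← mul_pow, neg_one_mul, neg_neg, one_pow, one_mul]

theorem desnanot_jacobi (A : Matrix (Fin (m + 2)) (Fin (m + 2)) R) :
    A.det * (A.submatrix (Fin.succ ∘ Fin.castSucc) (Fin.succ ∘ Fin.castSucc)).det =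
      (A.submatrix Fin.succ Fin.succ).det * (A.submatrix Fin.castSucc Fin.castSucc).det -
        (A.submatrix Fin.castSucc Fin.succ).det * (A.submatrix Fin.succ Fin.castSucc).det := by
  have corner_deleted : ((A.updateCol 0 (Pi.single 0 1)).updateCol (Fin.last (m + 1))
      (Pi.single (Fin.last (m + 1)) 1)).det =
      (A.submatrix (Fin.succ ∘ Fin.castSucc) (Fin.succ ∘ Fin.castSucc)).det := by
    have castSucc_block : (A.updateCol 0 (Pi.single 0 1)).submatrix Fin.castSucc Fin.castSucc =
        (A.submatrix Fin.castSucc Fin.castSucc).updateCol 0 (Pi.single 0 1) := by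
      ext r s
      simp [Matrix.updateCol_apply, Pi.single_apply]
    rw [det_updateCol_last_single_last, castSucc_block, det_updateCol_zero_single_zero]
    rfl
  rw [← corner_deleted, det_mul_det_updateCol_updateCol A Fin.last_pos.ne,
    det_updateCol_zero_single_zero, det_updateCol_last_single_last,
    det_updateCol_zero_single_last, det_updateCol_last_single_zero,
    neg_one_pow_mul_mul_neg_one_pow_mul]

/-- The increasing map `Fin (m + 1) → Fin (m + 2)` missing the penultimate index `m`: it encodes the
extra step in the last column index of `ω` and `ν`. -/
def skipPenultimate (m : ℕ) : Fin (m + 1) → Fin (m + 2) :=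
  (Fin.last m).castSucc.succAbove

theorem skipPenultimate_last (m : ℕ) : skipPenultimate m (Fin.last m) = Fin.last (m + 1) := by
  simp [skipPenultimate]

theorem skipPenultimate_castSucc (s : Fin m) :
    skipPenultimate m s.castSucc = s.castSucc.castSucc :=
  Fin.succAbove_of_castSucc_lt _ _ (Fin.castSucc_lt_castSucc_iff.2 s.castSucc_lt_last)

theorem skipPenultimate_zero (m : ℕ) : skipPenultimate (m + 1) 0 = 0 :=
  skipPenultimate_castSucc 0

theorem skipPenultimate_succ (s : Fin (m + 1)) :
    skipPenultimate (m + 1) s.succ = (skipPenultimate m s).succ :=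
  Fin.succ_succAbove_succ (Fin.last m).castSucc s

theorem val_skipPenultimate (s : Fin (m + 1)) :
    (skipPenultimate m s : ℕ) = if (s : ℕ) = m then (s : ℕ) + 1 else s := by
  cases s using Fin.lastCases with
  | last => simp [skipPenultimate_last]
  | cast s => simp [skipPenultimate_castSucc, s.isLt.ne]

theorem det_updateCol_zero_col_last (A : Matrix (Fin (m + 1)) (Fin (m + 2)) R) :
    ((A.submatrix id Fin.castSucc).updateCol 0 (A.col (Fin.last (m + 1)))).det =
      (-1) ^ m * (A.submatrix id Fin.succ).det := by
  have rotated : A.submatrix id Fin.succ =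
      ((A.submatrix id Fin.castSucc).updateCol 0 (A.col (Fin.last (m + 1)))).submatrix id
        (finRotate (m + 1)) := by
    ext r s
    cases s using Fin.lastCases with
    | last => simp
    | cast s => simp
  rw [rotated, Matrix.det_permute', sign_finRotate]
  simp [← mul_assoc, ← mul_pow]

theorem plucker_three_term (A : Matrix (Fin (m + 2)) (Fin (m + 3)) R) :
    (A.submatrix id Fin.succ).det * (A.submatrix Fin.succ (Fin.castSucc ∘ Fin.castSucc)).det =
      (A.submatrix id (skipPenultimate (m + 1))).det *
          (A.submatrix Fin.succ (Fin.castSucc ∘ Fin.succ)).det -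
        (A.submatrix id Fin.castSucc).det *
          (A.submatrix Fin.succ (Fin.succ ∘ skipPenultimate m)).det := by
  set N := A.submatrix id Fin.castSucc with hN
  set w := A.col (Fin.last (m + 2)) with hw
  have last_replaced :
      N.updateCol (Fin.last (m + 1)) w = A.submatrix id (skipPenultimate (m + 1)) := by
    ext r s
    cases s using Fin.lastCases with
    | last => simp [hw, skipPenultimate_last]
    | cast s => simp [hN, skipPenultimate_castSucc, s.castSucc_lt_last.ne]
  have both_replaced :
      ((N.updateCol 0 (Pi.single 0 1)).updateCol (Fin.last (m + 1)) w).det =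
        (A.submatrix Fin.succ (Fin.succ ∘ skipPenultimate m)).det := by
    rw [Matrix.updateCol_comm _ Fin.last_pos.ne, last_replaced, det_updateCol_zero_single_zero]
    congr 1
    ext r s
    simp [skipPenultimate_succ]
  have exchange := det_mul_det_updateCol_updateCol N (Fin.last_pos (n := m)).ne (Pi.single 0 1) w
  rw [both_replaced, last_replaced, det_updateCol_zero_single_zero, det_updateCol_zero_col_last,
    det_updateCol_last_single_zero, neg_one_pow_mul_mul_neg_one_pow_mul] at exchange
  simp only [hN, Matrix.submatrix_submatrix, Function.id_comp] at exchange
  linear_combination exchange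

end Minors

theorem det_submatrix_comm_of_isSymm {α ι R : Type*} [Fintype ι] [DecidableEq ι] [CommRing R]
    {A : Matrix α α R} (hA : A.IsSymm) (r s : ι → α) :
    (A.submatrix r s).det = (A.submatrix s r).det := by
  rw [← Matrix.det_transpose, Matrix.transpose_submatrix, hA.eq]

section BorderedMinors

variable {R : Type*} [CommRing R]

/-- The consecutive indices `i, i + 1, …, i + m - 1`, as indices of a matrix over `Option ℤ` whose
additional index `none` is the border. -/
def consecutive (i : ℤ) (m : ℕ) (r : Fin m) : Option ℤ :=
  some (i + (r : ℕ))

/-- The indices `none, i, i + 1, …, i + m - 1`. -/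
def bordered (i : ℤ) (m : ℕ) : Fin (m + 1) → Option ℤ :=
  Fin.cons none (consecutive i m)

variable (B : Matrix (Option ℤ) (Option ℤ) R) (i j : ℤ)

/-- The determinant `τ_k^{(i,j)}` formed from an arbitrary bordered matrix `B`. -/
def tauMinor : ℤ → R
  | .ofNat m => (B.submatrix (consecutive i m) (consecutive j m)).det
  | .negSucc _ => 0

/-- The determinant `σ_k^{(i,j)}` formed from an arbitrary bordered matrix `B`. -/
def sigmaMinor : ℤ → R
  | .ofNat (m + 1) => (B.submatrix (consecutive i (m + 1)) (bordered j m)).det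
  | _ => 0

/-- The determinant `ρ_k^{(i,j)}` formed from an arbitrary bordered matrix `B`. Its value at
`k = 1` is the corner entry of `B`. -/
def rhoMinor : ℤ → R
  | .ofNat (m + 1) => (B.submatrix (bordered i m) (bordered j m)).det
  | _ => 0

/-- The determinant `ω_k^{(i,j)}` formed from an arbitrary bordered matrix `B`. -/
def omegaMinor : ℤ → R
  | .ofNat (m + 1) =>
    (B.submatrix (consecutive i (m + 1)) (consecutive j (m + 2) ∘ skipPenultimate m)).det
  | _ => 0

/-- The determinant `ν_k^{(i,j)}` formed from an arbitrary bordered matrix `B`. -/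
def nuMinor : ℤ → R
  | .ofNat (m + 2) =>
    (B.submatrix (bordered i (m + 1)) (bordered j (m + 2) ∘ skipPenultimate (m + 1))).det
  | _ => 0

variable {B}

theorem bordered_comp_succ (m : ℕ) : bordered i m ∘ Fin.succ = consecutive i m := rfl

theorem consecutive_comp_castSucc (m : ℕ) :
    consecutive i (m + 1) ∘ Fin.castSucc = consecutive i m := rfl

theorem bordered_comp_castSucc (m : ℕ) : bordered i (m + 1) ∘ Fin.castSucc = bordered i m := by
  funext r
  cases r using Fin.cases <;> rfl

theorem bordered_comp_skipPenultimate (m : ℕ) :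
    bordered j (m + 2) ∘ skipPenultimate (m + 1) =
      Fin.cons none (consecutive j (m + 2) ∘ skipPenultimate m) := by
  funext s
  cases s using Fin.cases with
  | zero => simp [skipPenultimate_zero, bordered]
  | succ s => simp [skipPenultimate_succ, bordered]

theorem rhoMinor_mul_tauMinor (hB : B.IsSymm) (m : ℕ) :
    rhoMinor B i j (m + 2 : ℕ) * tauMinor B i j m =
      tauMinor B i j (m + 1 : ℕ) * rhoMinor B i j (m + 1 : ℕ) -
        sigmaMinor B i j (m + 1 : ℕ) * sigmaMinor B j i (m + 1 : ℕ) := by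
  have dj := desnanot_jacobi (B.submatrix (bordered i (m + 1)) (bordered j (m + 1)))
  simp only [Matrix.submatrix_submatrix, ← Function.comp_assoc, bordered_comp_succ,
    bordered_comp_castSucc, consecutive_comp_castSucc] at dj
  rw [det_submatrix_comm_of_isSymm hB (bordered i m) (consecutive j (m + 1)),
    mul_comm (Matrix.det (B.submatrix (consecutive j _) _))] at dj
  exact dj

theorem sigmaMinor_mul_sigmaMinor (hB : B.IsSymm) (m : ℕ) :
    sigmaMinor B j i (m + 2 : ℕ) * sigmaMinor B i j (m + 1 : ℕ) =
      nuMinor B i j (m + 2 : ℕ) * tauMinor B i j (m + 1 : ℕ) -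
        rhoMinor B i j (m + 2 : ℕ) * omegaMinor B i j (m + 1 : ℕ) := by
  have plucker := plucker_three_term (B.submatrix (bordered i (m + 1)) (bordered j (m + 2)))
  simp only [Matrix.submatrix_submatrix, ← Function.comp_assoc, bordered_comp_succ,
    bordered_comp_castSucc, Function.comp_id] at plucker
  rw [det_submatrix_comm_of_isSymm hB (bordered i (m + 1)) (consecutive j (m + 2))] at plucker
  exact plucker

end BorderedMinors

theorem stmt_14_general {R : Type*} [CommRing R] {B : Matrix (Option ℤ) (Option ℤ) R}
    (hB : B.IsSymm) (i j k : ℤ) :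
    rhoMinor B i j (k + 1) * tauMinor B i j (k - 1) =
      tauMinor B i j k * rhoMinor B i j k - sigmaMinor B i j k * sigmaMinor B j i k ∧
    sigmaMinor B j i k * sigmaMinor B i j (k - 1) =
      nuMinor B i j k * tauMinor B i j (k - 1) - rhoMinor B i j k * omegaMinor B i j (k - 1) := by
  match k with
  | .ofNat (m + 2) =>
    have pred : Int.ofNat (m + 2) - 1 = (m + 1 : ℕ) := by lia
    exact ⟨pred ▸ rhoMinor_mul_tauMinor i j hB (m + 1), pred ▸ sigmaMinor_mul_sigmaMinor i j hB m⟩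
  | 1 =>
    exact ⟨rhoMinor_mul_tauMinor i j hB 0, by simp [sigmaMinor, nuMinor, omegaMinor]⟩
  | 0 => simp [sigmaMinor, rhoMinor, nuMinor, show tauMinor B i j (-1) = 0 from rfl]
  | .negSucc m => simp [tauMinor, sigmaMinor, rhoMinor, nuMinor, Int.negSucc_sub_one]

section BimomentMatrix

variable (n : ℕ) (ξ c : Fin n → ℝ)

/-- The bimoment matrix `J`, bordered by the moments `β` in the row and the column of index `none`,
with corner entry `0`. -/
noncomputable def borderedBimoments : Matrix (Option ℤ) (Option ℤ) ℝ
  | none, none => 0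
  | none, some j => betaM n ξ c j
  | some i, none => betaM n ξ c i
  | some i, some j => Jmom n ξ c i j

theorem Jmom_comm (i j : ℤ) : Jmom n ξ c i j = Jmom n ξ c j i := by
  unfold Jmom
  rw [sum_comm]
  refine sum_congr rfl fun p _ => sum_congr rfl fun q _ => ?_
  rw [add_comm (ξ q), mul_comm (ξ q ^ i), mul_comm (c q)]

theorem borderedBimoments_isSymm : (borderedBimoments n ξ c).IsSymm :=
  Matrix.IsSymm.ext fun
    | none, none => rfl
    | none, some _ => rfl
    | some _, none => rfl
    | some i, some j => Jmom_comm n ξ c j i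

variable (i j : ℤ)

theorem tauDet_eq_tauMinor : ∀ k, tauDet n ξ c i j k = tauMinor (borderedBimoments n ξ c) i j k
  | .ofNat _ => rfl
  | .negSucc m => if_pos (Int.negSucc_lt_zero m)

theorem sigmaDet_eq_sigmaMinor :
    ∀ k, sigmaDet n ξ c i j k = sigmaMinor (borderedBimoments n ξ c) i j k
  | .ofNat (m + 1) => by
    refine congrArg Matrix.det (Matrix.ext fun r s => ?_)
    cases s using Fin.cases <;> rfl
  | 0 => rfl
  | .negSucc _ => if_pos (by lia)

theorem rhoDet_eq_rhoMinor :
    ∀ k, rhoDet n ξ c i j k = rhoMinor (borderedBimoments n ξ c) i j k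
  | .ofNat (m + 2) => by
    refine congrArg Matrix.det (Matrix.ext fun r s => ?_)
    cases r using Fin.cases <;> cases s using Fin.cases <;> rfl
  | 1 => (Matrix.det_fin_one (Matrix.of fun _ _ => 0)).symm
  | 0 => rfl
  | .negSucc _ => if_pos (by lia)

theorem omegaDet_eq_omegaMinor :
    ∀ k, omegaDet n ξ c i j k = omegaMinor (borderedBimoments n ξ c) i j k
  | .ofNat (m + 1) => by
    refine congrArg Matrix.det (Matrix.ext fun r s => congrArg (Jmom n ξ c _) ?_)
    simp [val_skipPenultimate]
  | 0 => rfl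
  | .negSucc _ => if_pos (by lia)

theorem nuDet_eq_nuMinor :
    ∀ k, nuDet n ξ c i j k = nuMinor (borderedBimoments n ξ c) i j k
  | .ofNat (m + 2) => by
    have column_index (s : Fin (m + 1)) :
        (if (s.succ : ℕ) = m + 2 - 1 then ((s.succ : ℕ) : ℤ) else (s.succ : ℕ) - 1) =
          (skipPenultimate m s : ℕ) := by
      simp [val_skipPenultimate]
    refine congrArg Matrix.det (Matrix.ext fun r s => ?_)
    rw [Matrix.submatrix_apply, bordered_comp_skipPenultimate]
    cases r using Fin.cases with
    | zero =>
      cases s using Fin.cases with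
      | zero => rfl
      | succ s => exact congrArg (fun l => betaM n ξ c (j + l)) (column_index s)
    | succ r =>
      cases s using Fin.cases with
      | zero => rfl
      | succ s => exact congrArg (fun l => Jmom n ξ c (i + (r : ℕ)) (j + l)) (column_index s)
  | 1 => rfl
  | 0 => rfl
  | .negSucc _ => if_pos (by lia)

end BimomentMatrix

/-- Lemma 3.1: for all `i, j ∈ ℤ` and `k ≥ 1`,
`ρ_{k+1}^{(i,j)} τ_{k-1}^{(i,j)} = τ_k^{(i,j)} ρ_k^{(i,j)} - σ_k^{(i,j)} σ_k^{(j,i)}` and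
`σ_k^{(j,i)} σ_{k-1}^{(i,j)} = ν_k^{(i,j)} τ_{k-1}^{(i,j)} - ρ_k^{(i,j)} ω_{k-1}^{(i,j)}`. -/
theorem stmt_14 (n : ℕ) (hn : 1 ≤ n) (ξ c : Fin n → ℝ)
    (hξ0 : ∀ p, 0 < ξ p) (hξmono : StrictMono ξ) (hc : ∀ p, 0 < c p)
    (i j k : ℤ) (hk : 1 ≤ k) :
    rhoDet n ξ c i j (k + 1) * tauDet n ξ c i j (k - 1) =
      tauDet n ξ c i j k * rhoDet n ξ c i j k -
        sigmaDet n ξ c i j k * sigmaDet n ξ c j i k ∧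
    sigmaDet n ξ c j i k * sigmaDet n ξ c i j (k - 1) =
      nuDet n ξ c i j k * tauDet n ξ c i j (k - 1) -
        rhoDet n ξ c i j k * omegaDet n ξ c i j (k - 1) := by
  simpa only [tauDet_eq_tauMinor, sigmaDet_eq_sigmaMinor, rhoDet_eq_rhoMinor,
    omegaDet_eq_omegaMinor, nuDet_eq_nuMinor] using
    stmt_14_general (borderedBimoments_isSymm n ξ c) i j k
end

section
/- Under the time evolution c_p(t) = c_p(0) e^{ξ_p t}, for every integer j, every integer k ≥ 1 and every t ∈ ℝ, the tau functions τ_k = τ_k^{(j,j)}(t) satisfy the quartic lattice equation (a 1+1 dimensional reduction of the discrete CKP equation in continuous form): ( τ̈_k τ_k − (τ̇_k)² )² = 4 ( τ̇_{k+1} τ_k − τ_{k+1} τ̇_k ) ( τ̇_k τ_{k−1} − τ_k τ̇_{k−1} ), where dots denote derivatives with respect to t. -/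
open Finset

/-- Time-dependent weights `c_p(t) = c_p(0) e^{ξ_p t}`. -/
noncomputable def cT (n : ℕ) (ξ c0 : Fin n → ℝ) (t : ℝ) : Fin n → ℝ :=
  fun p => c0 p * Real.exp (ξ p * t)

/-!
Write `A` for the bimoment matrix of size `m` and `b` for the vector of single moments. The time
evolution gives `Ȧ = b bᵀ`, hence `τ̇_m = bᵀ adj(A) b`, and the components of `x = adj(A) b` are
determinants with one column equal to `b`, whose derivative is `adj(A) ḃ`. Consequently
`τ̈_m = 2 ḃᵀ x`. Let `σ_m` be the last component of the vector `x` of size `m + 1`; it is also the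
defect of the vector `x` of size `m` in the linear equation which follows the ones it solves. Then
* `τ̇_{m+1} τ_m - τ_{m+1} τ̇_m = σ_m²`, by symmetry of the bimoments;
* `τ̈_m τ_m - τ̇_m² = 2 σ_m σ_{m-1}`, by `J_{r+1,s} + J_{r,s+1} = β_r β_s`;
and eliminating the `σ_m` gives the quartic equation.
-/

namespace CToda

open Matrix

section Determinant

variable {R : Type*} [CommRing R]

lemma dotProduct_cramer_comm {ι : Type*} [Fintype ι] [DecidableEq ι] {A : Matrix ι ι R}
    (hA : A.IsSymm) (u v : ι → R) : u ⬝ᵥ A.cramer v = v ⬝ᵥ A.cramer u := by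
  rw [cramer_eq_adjugate_mulVec, cramer_eq_adjugate_mulVec, dotProduct_mulVec,
    ← mulVec_transpose, hA.adjugate.eq, dotProduct_comm]

lemma det_eq_det_submatrix_castSucc {m : ℕ} (M : Matrix (Fin (m + 1)) (Fin (m + 1)) R)
    (hM : M (Fin.last m) = Pi.single (Fin.last m) 1) :
    M.det = (M.submatrix Fin.castSucc Fin.castSucc).det := by
  rw [det_succ_row M (Fin.last m), Fin.sum_univ_castSucc]
  simp [hM, ← two_mul]

lemma adjugate_castSucc_last {m : ℕ} (M : Matrix (Fin (m + 1)) (Fin (m + 1)) R) (s : Fin m) :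
    M.adjugate s.castSucc (Fin.last m) =
      -(M.submatrix Fin.castSucc Fin.castSucc).cramer (fun r => M r.castSucc (Fin.last m)) s := by
  set N := (M.updateRow (Fin.last m) (Pi.single s.castSucc 1)).submatrix id
    (Equiv.swap s.castSucc (Fin.last m)) with hN
  have hdet : N.det = -M.adjugate s.castSucc (Fin.last m) := by
    rw [hN, det_permute', Equiv.Perm.sign_swap (Fin.castSucc_lt_last s).ne, adjugate_apply]
    simp
  have hlast : N (Fin.last m) = Pi.single (Fin.last m) 1 := by
    ext q
    simp [hN, Pi.single_apply, Equiv.swap_apply_eq_iff]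
  have hminor : N.submatrix Fin.castSucc Fin.castSucc =
      (M.submatrix Fin.castSucc Fin.castSucc).updateCol s
        (fun r => M r.castSucc (Fin.last m)) := by
    ext r q
    rcases eq_or_ne q s with rfl | hq
    · simp [hN, (Fin.castSucc_lt_last r).ne]
    · simp [hN, hq, (Fin.castSucc_lt_last r).ne, Equiv.swap_apply_of_ne_of_ne]
  rw [cramer_apply, ← hminor, ← det_eq_det_submatrix_castSucc N hlast, hdet, neg_neg]

lemma det_succ_eq_sub_dotProduct_cramer {m : ℕ} (M : Matrix (Fin (m + 1)) (Fin (m + 1)) R) :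
    M.det = (M.submatrix Fin.castSucc Fin.castSucc).det * M (Fin.last m) (Fin.last m) -
      (fun s : Fin m => M (Fin.last m) s.castSucc) ⬝ᵥ
        (M.submatrix Fin.castSucc Fin.castSucc).cramer (fun r => M r.castSucc (Fin.last m)) := by
  have hcorner : M.adjugate (Fin.last m) (Fin.last m) =
      (M.submatrix Fin.castSucc Fin.castSucc).det := by
    rw [adjugate_fin_succ_eq_det_submatrix, Fin.succAbove_last]
    simp [← two_mul]
  rw [det_eq_sum_mul_adjugate_row M (Fin.last m), Fin.sum_univ_castSucc, hcorner]
  simp only [adjugate_castSucc_last, mul_neg, sum_neg_distrib, dotProduct]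
  ring

end Determinant

section RankOneDerivative

variable {𝕜 𝔸 ι : Type*} [NontriviallyNormedField 𝕜] [NormedCommRing 𝔸] [NormedAlgebra 𝕜 𝔸]
  [Fintype ι] [DecidableEq ι] {A : 𝕜 → Matrix ι ι 𝔸} {t : 𝕜}

lemma hasDerivAt_det {A' : Matrix ι ι 𝔸} (hA : ∀ i j, HasDerivAt (A · i j) (A' i j) t) :
    HasDerivAt (fun s => (A s).det) (∑ j, (A t).cramer (A'.col j) j) t := by
  simp only [cramer_apply, det_apply]
  rw [sum_comm]
  refine HasDerivAt.fun_sum fun σ _ => ?_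
  rw [← smul_sum]
  refine ((HasDerivAt.fun_finsetProd fun i _ => hA (σ i) i).congr_deriv ?_).const_smul _
  refine sum_congr rfl fun j _ => ?_
  rw [← prod_erase_mul _ _ (mem_univ j), smul_eq_mul, updateCol_self, col_apply]
  congr 1
  exact prod_congr rfl fun i hi => by rw [updateCol_ne (ne_of_mem_erase hi)]

lemma hasDerivAt_det_of_rank_one {u v : ι → 𝔸} (hA : ∀ i j, HasDerivAt (A · i j) (u i * v j) t) :
    HasDerivAt (fun s => (A s).det) (v ⬝ᵥ (A t).cramer u) t := by
  refine (hasDerivAt_det (A' := vecMulVec u v) hA).congr_deriv (sum_congr rfl fun j _ => ?_)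
  have hcol : (vecMulVec u v).col j = v j • u := by
    ext i
    simp [vecMulVec_apply, mul_comm]
  rw [hcol, map_smul, Pi.smul_apply, smul_eq_mul]

-- Every column other than the one holding `u` has a derivative proportional to `u`.
lemma hasDerivAt_cramer_of_rank_one {u : 𝕜 → ι → 𝔸} {u' v : ι → 𝔸}
    (hA : ∀ i j, HasDerivAt (A · i j) (u t i * v j) t)
    (hu : ∀ i, HasDerivAt (u · i) (u' i) t) (i : ι) :
    HasDerivAt (fun s => (A s).cramer (u s) i) ((A t).cramer u' i) t := by
  simp only [cramer_apply]
  have hentry : ∀ p q, HasDerivAt (fun s => (A s).updateCol i (u s) p q)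
      ((vecMulVec (u t) v).updateCol i u' p q) t := by
    intro p q
    rcases eq_or_ne q i with rfl | hq
    · simpa only [updateCol_self] using hu p
    · simpa only [updateCol_ne hq, vecMulVec_apply] using hA p q
  refine (hasDerivAt_det hentry).congr_deriv ?_
  rw [sum_eq_single i _ (by simp)]
  · have hcol : ((vecMulVec (u t) v).updateCol i u').col i = u' := by
      ext p
      simp
    rw [hcol, cramer_apply, updateCol_idem]
  · intro j _ hj
    have hcol : ((vecMulVec (u t) v).updateCol i u').col j = v j • u t := by
      ext p
      simp [updateCol_ne hj, vecMulVec_apply, mul_comm]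
    rw [hcol, map_smul, Pi.smul_apply, cramer_apply,
      det_zero_of_column_eq hj fun p => by simp [hj.symm], smul_zero]

end RankOneDerivative

section Moments

variable {R : Type*}

/-- The truncation `(J_{r,s})_{0 ≤ r,s < m}` of the infinite array of bimoments; the paper's
indices `j + r`, `j + s` are absorbed into `J`. -/
def bimomentMatrix (J : ℕ → ℕ → R) (m : ℕ) : Matrix (Fin m) (Fin m) R :=
  of fun r s => J r s

/-- The truncation `(β_0, …, β_{m-1})` of the sequence of single moments. -/
def momentVec (β : ℕ → R) (m : ℕ) : Fin m → R :=
  fun r => β r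

lemma isSymm_bimomentMatrix {J : ℕ → ℕ → R} (hJ : ∀ r s, J r s = J s r) (m : ℕ) :
    (bimomentMatrix J m).IsSymm :=
  IsSymm.ext fun r s => hJ s r

variable [CommRing R]

/-- The tau function `τ_m`. -/
def tau (J : ℕ → ℕ → R) (m : ℕ) : R :=
  (bimomentMatrix J m).det

/-- `det A • A⁻¹ b` for the bimoment matrix `A` and the moment vector `b` of size `m`, in the
division-free form which makes sense for singular `A` as well. -/
def momentSol (J : ℕ → ℕ → R) (β : ℕ → R) (m : ℕ) : Fin m → R :=
  (bimomentMatrix J m).cramer (momentVec β m)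

/-- The bordered determinant `-det [[0, bᵀ], [b, A]] = bᵀ adj(A) b`, for the bimoment matrix `A`
and the moment vector `b` of size `m`. It is the paper's `-ρ_{m+1}` and turns out to be `τ̇_m`. -/
def rho (J : ℕ → ℕ → R) (β : ℕ → R) (m : ℕ) : R :=
  momentVec β m ⬝ᵥ momentSol J β m

/-- The determinant of the bimoment matrix of size `m + 1` with its last column replaced by the
single moments. It is the paper's `σ_{m+1}` up to sign, the paper having the moments first. -/
def sigma (J : ℕ → ℕ → R) (β : ℕ → R) (m : ℕ) : R :=
  momentSol J β (m + 1) (Fin.last m)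

variable {J : ℕ → ℕ → R} {β : ℕ → R}

lemma bimomentMatrix_mulVec_momentSol (J : ℕ → ℕ → R) (β : ℕ → R) (m : ℕ) :
    bimomentMatrix J m *ᵥ momentSol J β m = tau J m • momentVec β m :=
  mulVec_cramer _ _

lemma sigma_eq_sub_sum (J : ℕ → ℕ → R) (β : ℕ → R) (m : ℕ) :
    sigma J β m = tau J m * β m - ∑ s : Fin m, J m s * momentSol J β m s := by
  have hblock : ((bimomentMatrix J (m + 1)).updateCol (Fin.last m)
      (momentVec β (m + 1))).submatrix Fin.castSucc Fin.castSucc = bimomentMatrix J m := by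
    ext r s
    simp [bimomentMatrix, (Fin.castSucc_lt_last s).ne]
  rw [sigma, momentSol, cramer_apply, det_succ_eq_sub_dotProduct_cramer, hblock]
  have hcol : (fun r : Fin m => (bimomentMatrix J (m + 1)).updateCol (Fin.last m)
      (momentVec β (m + 1)) r.castSucc (Fin.last m)) = momentVec β m := by
    ext r
    simp [momentVec]
  rw [hcol]
  simp [tau, momentSol, momentVec, bimomentMatrix, dotProduct, (Fin.castSucc_lt_last _).ne]

lemma sum_mul_momentSol (J : ℕ → ℕ → R) (β : ℕ → R) {m : ℕ} (r : Fin (m + 1)) :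
    ∑ s : Fin m, J r s * momentSol J β m s =
      tau J m * β r - if r = Fin.last m then sigma J β m else 0 := by
  refine Fin.lastCases ?_ (fun r => ?_) r
  · rw [if_pos rfl, sigma_eq_sub_sum, Fin.val_last, sub_sub_cancel]
  · rw [if_neg (Fin.castSucc_lt_last r).ne, sub_zero]
    exact congrFun (bimomentMatrix_mulVec_momentSol J β m) r

/- Evaluate `xᵀ A y` in two ways, for the matrix `A` of size `m + 1`, `x = momentSol J β (m + 1)`
and `y = momentSol J β m` extended by `0`. -/
lemma rho_succ_mul_tau_sub (hJ : ∀ r s, J r s = J s r) (m : ℕ) :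
    rho J β (m + 1) * tau J m - tau J (m + 1) * rho J β m = sigma J β m ^ 2 := by
  set x := momentSol J β (m + 1) with hx
  set y : Fin (m + 1) → R := Fin.snoc (momentSol J β m) 0 with hy
  have hleft : x ⬝ᵥ (bimomentMatrix J (m + 1) *ᵥ y) = tau J (m + 1) * rho J β m := by
    rw [dotProduct_mulVec, ← mulVec_transpose, (isSymm_bimomentMatrix hJ _).eq, hx,
      bimomentMatrix_mulVec_momentSol, smul_dotProduct, smul_eq_mul]
    simp [rho, dotProduct, Fin.sum_univ_castSucc, momentVec, hy]
  have hright : x ⬝ᵥ (bimomentMatrix J (m + 1) *ᵥ y) =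
      rho J β (m + 1) * tau J m - sigma J β m ^ 2 := by
    have hrow : ∀ r, (bimomentMatrix J (m + 1) *ᵥ y) r =
        tau J m * β r - if r = Fin.last m then sigma J β m else 0 := by
      intro r
      rw [← sum_mul_momentSol]
      simp [mulVec, dotProduct, Fin.sum_univ_castSucc, bimomentMatrix, hy]
    have hlast : x (Fin.last m) = sigma J β m := rfl
    simp only [dotProduct, hrow, mul_sub, sum_sub_distrib, mul_ite, mul_zero, sum_ite_eq',
      mem_univ, if_true, hlast, rho, momentVec, ← hx, sum_mul]
    congr 1
    · exact sum_congr rfl fun r _ => by ring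
    · ring
  rw [← hleft, hright, sub_sub_cancel]

lemma two_mul_shifted_quadForm (hJ : ∀ r s, J r s = J s r)
    (hshift : ∀ r s, J (r + 1) s + J r (s + 1) = β r * β s) {m : ℕ} (x : Fin m → R) :
    2 * ∑ r : Fin m, x r * ∑ s : Fin m, J (r + 1) s * x s = (momentVec β m ⬝ᵥ x) ^ 2 := by
  have htranspose : ∑ r : Fin m, x r * ∑ s : Fin m, J (r + 1) s * x s =
      ∑ r : Fin m, x r * ∑ s : Fin m, J r (s + 1) * x s := by
    simp only [mul_sum]
    rw [sum_comm]
    exact sum_congr rfl fun s _ => sum_congr rfl fun r _ => by rw [hJ]; ring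
  rw [two_mul]
  nth_rw 2 [htranspose]
  rw [sq, dotProduct, sum_mul_sum]
  simp only [momentVec, mul_sum, ← sum_add_distrib]
  exact sum_congr rfl fun r _ => sum_congr rfl fun s _ => by
    linear_combination x r * x s * hshift r s

/- Here the quadratic form of the shifted matrix `(J_{r+1,s})` is evaluated in two ways at
`momentSol J β (m + 1)`: by the shift relation, and row by row. -/
lemma two_mul_shifted_rho_mul_tau_sub (hJ : ∀ r s, J r s = J s r)
    (hshift : ∀ r s, J (r + 1) s + J r (s + 1) = β r * β s) (m : ℕ) :
    2 * (momentVec (fun r => β (r + 1)) (m + 1) ⬝ᵥ momentSol J β (m + 1)) * tau J (m + 1) -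
      rho J β (m + 1) ^ 2 = 2 * sigma J β (m + 1) * sigma J β m := by
  set x := momentSol J β (m + 1) with hx
  have hrows : ∑ r : Fin (m + 1), x r * ∑ s : Fin (m + 1), J (r + 1) s * x s =
      (momentVec (fun r => β (r + 1)) (m + 1) ⬝ᵥ x) * tau J (m + 1) -
        sigma J β m * sigma J β (m + 1) := by
    have hrow : ∀ r : Fin (m + 1), ∑ s : Fin (m + 1), J (r + 1) s * x s =
        tau J (m + 1) * β (r + 1) - if r = Fin.last m then sigma J β (m + 1) else 0 := by
      intro r
      simpa only [Fin.val_succ, Fin.succ_eq_last_succ] using sum_mul_momentSol J β r.succ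
    have hlast : x (Fin.last m) = sigma J β m := rfl
    simp only [hrow, mul_sub, sum_sub_distrib, mul_ite, mul_zero, sum_ite_eq', mem_univ, if_true,
      hlast, dotProduct, momentVec, sum_mul]
    congr 1
    exact sum_congr rfl fun r _ => by ring
  have hquad := two_mul_shifted_quadForm hJ hshift x
  rw [hrows] at hquad
  rw [rho, ← hx]
  linear_combination hquad

end Moments

section Flow

variable {𝕜 𝔸 : Type*} [NontriviallyNormedField 𝕜] [NormedCommRing 𝔸] [NormedAlgebra 𝕜 𝔸]
  {J : 𝕜 → ℕ → ℕ → 𝔸} {β : 𝕜 → ℕ → 𝔸} {t : 𝕜}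

lemma hasDerivAt_tau (hJ' : ∀ r s, HasDerivAt (J · r s) (β t r * β t s) t) (m : ℕ) :
    HasDerivAt (fun s => tau (J s) m) (rho (J t) (β t) m) t :=
  hasDerivAt_det_of_rank_one (A := fun s => bimomentMatrix (J s) m) fun r s => hJ' r s

lemma hasDerivAt_rho (hJ : ∀ r s, J t r s = J t s r)
    (hJ' : ∀ r s, HasDerivAt (J · r s) (β t r * β t s) t)
    (hβ' : ∀ r, HasDerivAt (β · r) (β t (r + 1)) t) (m : ℕ) :
    HasDerivAt (fun s => rho (J s) (β s) m)
      (2 * (momentVec (fun r => β t (r + 1)) m ⬝ᵥ momentSol (J t) (β t) m)) t := by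
  have hsol : ∀ r, HasDerivAt (fun s => momentSol (J s) (β s) m r)
      ((bimomentMatrix (J t) m).cramer (momentVec (fun r => β t (r + 1)) m) r) t :=
    hasDerivAt_cramer_of_rank_one (A := fun s => bimomentMatrix (J s) m)
      (u := fun s => momentVec (β s) m) (fun r s => hJ' r s) fun r => hβ' r
  have hsum : HasDerivAt (fun s => ∑ r : Fin m, β s r * momentSol (J s) (β s) m r) _ t :=
    HasDerivAt.fun_sum fun r _ => (hβ' r).fun_mul (hsol r)
  refine hsum.congr_deriv ?_
  rw [sum_add_distrib, two_mul]
  congr 1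
  exact dotProduct_cramer_comm (isSymm_bimomentMatrix hJ m) (momentVec (β t) m) _

theorem quartic_tau (hJ : ∀ t r s, J t r s = J t s r)
    (hJ' : ∀ t r s, HasDerivAt (J · r s) (β t r * β t s) t)
    (hβ' : ∀ t r, HasDerivAt (β · r) (β t (r + 1)) t)
    (hshift : ∀ t r s, J t (r + 1) s + J t r (s + 1) = β t r * β t s) (m : ℕ) (t : 𝕜) :
    (deriv (deriv fun s => tau (J s) (m + 1)) t * tau (J t) (m + 1) -
        deriv (fun s => tau (J s) (m + 1)) t ^ 2) ^ 2 =
      4 * (deriv (fun s => tau (J s) (m + 2)) t * tau (J t) (m + 1) -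
          tau (J t) (m + 2) * deriv (fun s => tau (J s) (m + 1)) t) *
        (deriv (fun s => tau (J s) (m + 1)) t * tau (J t) m -
          tau (J t) (m + 1) * deriv (fun s => tau (J s) m) t) := by
  have hτ : ∀ k, deriv (fun s => tau (J s) k) = fun s => rho (J s) (β s) k :=
    fun k => funext fun s => (hasDerivAt_tau (hJ' s) k).deriv
  simp only [hτ]
  rw [(hasDerivAt_rho (hJ t) (hJ' t) (hβ' t) (m + 1)).deriv,
    two_mul_shifted_rho_mul_tau_sub (hJ t) (hshift t) m,
    rho_succ_mul_tau_sub (hJ t) (m + 1), rho_succ_mul_tau_sub (hJ t) m]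
  ring

end Flow

section Weights

variable {n : ℕ} {ξ : Fin n → ℝ}

lemma Jmom_comm (ξ c : Fin n → ℝ) (i j : ℤ) : Jmom n ξ c i j = Jmom n ξ c j i := by
  simp only [Jmom]
  rw [sum_comm]
  exact sum_congr rfl fun p _ => sum_congr rfl fun q _ => by rw [add_comm (ξ q)]; ring

lemma Jmom_add_one_add_Jmom (hξ : ∀ p q, ξ p + ξ q ≠ 0) (c : Fin n → ℝ) (i j : ℤ) :
    Jmom n ξ c (i + 1) j + Jmom n ξ c i (j + 1) = betaM n ξ c i * betaM n ξ c j := by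
  have hξ0 : ∀ p, ξ p ≠ 0 := fun p h => hξ p p (by rw [h, add_zero])
  simp only [betaM, Jmom, sum_mul_sum, ← sum_add_distrib]
  refine sum_congr rfl fun p _ => sum_congr rfl fun q _ => ?_
  have := hξ p q
  rw [zpow_add_one₀ (hξ0 p), zpow_add_one₀ (hξ0 q)]
  field_simp

lemma hasDerivAt_cT (ξ c0 : Fin n → ℝ) (p : Fin n) (t : ℝ) :
    HasDerivAt (cT n ξ c0 · p) (ξ p * cT n ξ c0 t p) t := by
  refine (((hasDerivAt_id t).const_mul (ξ p)).exp.const_mul (c0 p)).congr_deriv ?_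
  simp only [cT, id]
  ring

lemma hasDerivAt_betaM (hξ : ∀ p, ξ p ≠ 0) (c0 : Fin n → ℝ) (i : ℤ) (t : ℝ) :
    HasDerivAt (fun s => betaM n ξ (cT n ξ c0 s) i) (betaM n ξ (cT n ξ c0 t) (i + 1)) t := by
  refine (HasDerivAt.fun_sum fun p _ =>
    (hasDerivAt_cT ξ c0 p t).const_mul (ξ p ^ i)).congr_deriv (sum_congr rfl fun p _ => ?_)
  rw [zpow_add_one₀ (hξ p), mul_assoc]

lemma hasDerivAt_Jmom (hξ : ∀ p q, ξ p + ξ q ≠ 0) (c0 : Fin n → ℝ) (i j : ℤ) (t : ℝ) :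
    HasDerivAt (fun s => Jmom n ξ (cT n ξ c0 s) i j)
      (betaM n ξ (cT n ξ c0 t) i * betaM n ξ (cT n ξ c0 t) j) t := by
  refine (HasDerivAt.fun_sum fun p _ => HasDerivAt.fun_sum fun q _ =>
    ((hasDerivAt_cT ξ c0 p t).mul (hasDerivAt_cT ξ c0 q t)).const_mul
      (ξ p ^ i * ξ q ^ j / (ξ p + ξ q))).congr_deriv ?_
  simp only [betaM, sum_mul_sum]
  refine sum_congr rfl fun p _ => sum_congr rfl fun q _ => ?_
  have := hξ p q
  field_simp

lemma tauDet_natCast (ξ c : Fin n → ℝ) (j : ℤ) (m : ℕ) :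
    tauDet n ξ c j j m = tau (fun r s => Jmom n ξ c (j + (r : ℤ)) (j + (s : ℤ))) m :=
  if_neg (by lia)

end Weights

end CToda

open CToda in
theorem stmt_17_general (n : ℕ) (ξ c0 : Fin n → ℝ) (hξ : ∀ p q, ξ p + ξ q ≠ 0)
    (j k : ℤ) (hk : 1 ≤ k) (t : ℝ) :
    (deriv (deriv (fun s => tauDet n ξ (cT n ξ c0 s) j j k)) t * tauDet n ξ (cT n ξ c0 t) j j k -
        (deriv (fun s => tauDet n ξ (cT n ξ c0 s) j j k) t) ^ 2) ^ 2 =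
      4 * (deriv (fun s => tauDet n ξ (cT n ξ c0 s) j j (k + 1)) t *
              tauDet n ξ (cT n ξ c0 t) j j k -
            tauDet n ξ (cT n ξ c0 t) j j (k + 1) *
              deriv (fun s => tauDet n ξ (cT n ξ c0 s) j j k) t) *
          (deriv (fun s => tauDet n ξ (cT n ξ c0 s) j j k) t *
              tauDet n ξ (cT n ξ c0 t) j j (k - 1) -
            tauDet n ξ (cT n ξ c0 t) j j k *
              deriv (fun s => tauDet n ξ (cT n ξ c0 s) j j (k - 1)) t) := by
  obtain ⟨m, rfl⟩ : ∃ m : ℕ, k = (m + 1 : ℕ) := ⟨(k - 1).toNat, by lia⟩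
  rw [show ((m + 1 : ℕ) : ℤ) + 1 = (m + 2 : ℕ) by push_cast; ring,
    show ((m + 1 : ℕ) : ℤ) - 1 = (m : ℕ) by push_cast; ring]
  have hξ0 : ∀ p, ξ p ≠ 0 := fun p h => hξ p p (by rw [h, add_zero])
  have hcast : ∀ r : ℕ, j + ((r + 1 : ℕ) : ℤ) = j + r + 1 := fun r => by push_cast; ring
  simp only [tauDet_natCast]
  refine quartic_tau (β := fun s r => betaM n ξ (cT n ξ c0 s) (j + (r : ℤ)))
    (fun s _ _ => Jmom_comm ξ (cT n ξ c0 s) _ _)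
    (fun s _ _ => hasDerivAt_Jmom hξ c0 _ _ s) (fun s r => ?_) (fun s p q => ?_) m t
  · rw [hcast]
    exact hasDerivAt_betaM hξ0 c0 _ s
  · rw [hcast, hcast]
    exact Jmom_add_one_add_Jmom hξ (cT n ξ c0 s) _ _

/-- The quartic form (3.8) of the C-Toda lattice: under `c_p(t) = c_p(0) e^{ξ_p t}`, for all
`j ∈ ℤ`, `k ≥ 1`, `t ∈ ℝ`, the tau functions `τ_k = τ_k^{(j,j)}(t)` satisfy
`(τ̈_k τ_k - τ̇_k²)² = 4 (τ̇_{k+1} τ_k - τ_{k+1} τ̇_k)(τ̇_k τ_{k-1} - τ_k τ̇_{k-1})`. -/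
theorem stmt_17 (n : ℕ) (hn : 1 ≤ n) (ξ c0 : Fin n → ℝ)
    (hξ0 : ∀ p, 0 < ξ p) (hξmono : StrictMono ξ) (hc : ∀ p, 0 < c0 p)
    (j k : ℤ) (hk : 1 ≤ k) (t : ℝ) :
    (deriv (deriv (fun s => tauDet n ξ (cT n ξ c0 s) j j k)) t * tauDet n ξ (cT n ξ c0 t) j j k -
        (deriv (fun s => tauDet n ξ (cT n ξ c0 s) j j k) t) ^ 2) ^ 2 =
      4 * (deriv (fun s => tauDet n ξ (cT n ξ c0 s) j j (k + 1)) t * tauDet n ξ (cT n ξ c0 t) j j k -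
            tauDet n ξ (cT n ξ c0 t) j j (k + 1) * deriv (fun s => tauDet n ξ (cT n ξ c0 s) j j k) t) *
          (deriv (fun s => tauDet n ξ (cT n ξ c0 s) j j k) t * tauDet n ξ (cT n ξ c0 t) j j (k - 1) -
            tauDet n ξ (cT n ξ c0 t) j j k * deriv (fun s => tauDet n ξ (cT n ξ c0 s) j j (k - 1)) t) :=
  stmt_17_general n ξ c0 (fun p q => (add_pos (hξ0 p) (hξ0 q)).ne') j k hk t
end
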